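/- Let G be a compactly generated t.d.l.c. group, let g ∈ G, and let p be a prime dividing the scale s(g). Then every Cayley–Abels graph for G has degree at least p + 1. In particular, if p is the largest prime occurring as a factor of any value of the scale function of G, then md(G) ≥ p + 1. -/

import Mathlib

/-- A Cayley–Abels graph for a topological group `G`. -/
def IsCayleyAbels {G V : Type*} [Group G] [TopologicalSpace G]
    (Γ : SimpleGraph V) (ρ : G →* Equiv.Perm V) : Prop :=
  Γ.Connected ∧ (∀ v : V, (Γ.neighborSet v).Finite) ∧
    (∀ (g : G) (u v : V), Γ.Adj u v → Γ.Adj (ρ g u) (ρ g v)) ∧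
    (∀ u v : V, ∃ g : G, ρ g u = v) ∧
    (∀ v : V, IsCompact {g : G | ρ g v = v} ∧ IsOpen {g : G | ρ g v = v})

/-- The conjugate subgroup `g⁻¹ U g`. -/
def conjSubgroup {G : Type*} [Group G] (g : G) (U : Subgroup G) : Subgroup G :=
  U.map (MulAut.conj g⁻¹).toMonoidHom

/-- The scale of `g`: the minimum of the indices `[U : U ∩ g⁻¹Ug]` over all compact open
subgroups `U` of `G`. -/
noncomputable def scaleOf (G : Type*) [Group G] [TopologicalSpace G] (g : G) : ℕ :=
  sInf {n : ℕ | ∃ U : Subgroup G, IsCompact (U : Set G) ∧ IsOpen (U : Set G) ∧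
    n = (conjSubgroup g U).relIndex U}

/-!
If all degrees are at most `p`, then a subgroup `H` fixing an edge `{a, b}` moves each neighbour of
`a` inside a set of fewer than `p` points, so passing to the stabilizer of that neighbour costs an
index prime to `p`. Walking through the graph, the pointwise stabilizer `W` of a vertex and all its
neighbours meets every open subgroup containing the kernel `K` of the action in a subgroup whose
index in `W` is prime to `p`.

On the other hand, `K` is compact, so some compact open `U ≥ K` attains the scale `s` of `g`. Then
`U ∩ g⁻¹Ug` attains it as well, and iterating yields open subgroups `V` with `K ≤ V ≤ U` and
`[U : V] = s ^ n`. If `p` divides `s`, the fixed finite index `[U : U ∩ W]` cannot absorb `p ^ n`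
for large `n`, so `p` divides `[W : W ∩ V]`.
-/

open MulAction

section Conjugation

variable {G : Type*} [Group G]

theorem mem_conjSubgroup {g x : G} {U : Subgroup G} :
    x ∈ conjSubgroup g U ↔ g * x * g⁻¹ ∈ U := by
  constructor
  · rintro ⟨y, hy, rfl⟩
    simpa [mul_assoc] using hy
  · exact fun hx ↦ ⟨g * x * g⁻¹, hx, by simp [mul_assoc]⟩

theorem conjSubgroup_inf (g : G) (A B : Subgroup G) :
    conjSubgroup g (A ⊓ B) = conjSubgroup g A ⊓ conjSubgroup g B :=
  Subgroup.map_inf A B _ (MulAut.conj g⁻¹).injective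

theorem conjSubgroup_sup (g : G) (A B : Subgroup G) :
    conjSubgroup g (A ⊔ B) = conjSubgroup g A ⊔ conjSubgroup g B :=
  Subgroup.map_sup A B _

theorem conjSubgroup_mono (g : G) {A B : Subgroup G} (h : A ≤ B) :
    conjSubgroup g A ≤ conjSubgroup g B :=
  Subgroup.map_mono h

theorem conjSubgroup_of_normal (g : G) (K : Subgroup G) [hK : K.Normal] :
    conjSubgroup g K = K := by
  ext x
  rw [mem_conjSubgroup, ← hK.mem_comm_iff, inv_mul_cancel_left]

theorem relIndex_conjSubgroup_conjSubgroup (g : G) (A B : Subgroup G) :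
    (conjSubgroup g A).relIndex (conjSubgroup g B) = A.relIndex B :=
  Subgroup.relIndex_map_map_of_injective A B (MulAut.conj g⁻¹).injective

theorem isOpen_conjSubgroup [TopologicalSpace G] [IsTopologicalGroup G] (g : G)
    {U : Subgroup G} (hU : IsOpen (U : Set G)) : IsOpen (conjSubgroup g U : Set G) := by
  have hpreimage : (conjSubgroup g U : Set G) = (fun x ↦ g * x * g⁻¹) ⁻¹' U :=
    Set.ext fun _ ↦ mem_conjSubgroup
  rw [hpreimage]
  exact hU.preimage (by fun_prop)

end Conjugation

section RelativeIndex

variable {G : Type*} [Group G]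

theorem relIndex_dvd_relIndex_inf_mul_relIndex (A B C : Subgroup G) :
    A.relIndex C ∣ A.relIndex (B ⊓ C) * B.relIndex C := by
  rw [Subgroup.relIndex_inf_mul_relIndex]
  exact Subgroup.relIndex_dvd_of_le_left C inf_le_left

theorem relIndex_inf_dvd_relIndex_of_le {A B : Subgroup G} (hAB : A ≤ B) (C : Subgroup G) :
    A.relIndex (B ⊓ C) ∣ A.relIndex C := by
  refine Dvd.intro (B.relIndex C) ?_
  rw [Subgroup.relIndex_inf_mul_relIndex, inf_eq_left.mpr hAB]

theorem sup_relIndex_sup_dvd (A B K : Subgroup G) [K.Normal] :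
    (A ⊔ K).relIndex (B ⊔ K) ∣ A.relIndex B := by
  have hmap := Subgroup.relIndex_map_map (QuotientGroup.mk' K) A B
  rw [QuotientGroup.ker_mk'] at hmap
  rw [← hmap, ← Subgroup.relIndex_comap]
  exact Subgroup.relIndex_dvd_of_le_left B (Subgroup.le_comap_map _ A)

variable [TopologicalSpace G] [IsTopologicalGroup G]

theorem relIndex_ne_zero_of_isOpen_of_isCompact {A B : Subgroup G} (hA : IsOpen (A : Set G))
    (hB : IsCompact (B : Set G)) : A.relIndex B ≠ 0 := by
  have : CompactSpace B := isCompact_iff_compactSpace.mp hB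
  have hopen : IsOpen (A.subgroupOf B : Set B) := hA.preimage continuous_subtype_val
  have := Subgroup.quotient_finite_of_isOpen _ hopen
  exact Subgroup.index_ne_zero_of_finite

theorem isCompact_of_isOpen_of_le {A B : Subgroup G} (hA : IsOpen (A : Set G))
    (hB : IsCompact (B : Set G)) (hAB : A ≤ B) : IsCompact (A : Set G) :=
  hB.of_isClosed_subset (A.isClosed_of_isOpen hA) hAB

end RelativeIndex

section Scale

variable {G : Type*} [Group G] [TopologicalSpace G]

theorem scaleOf_le_relIndex (g : G) {U : Subgroup G} (hc : IsCompact (U : Set G))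
    (ho : IsOpen (U : Set G)) : scaleOf G g ≤ (conjSubgroup g U).relIndex U :=
  Nat.sInf_le ⟨U, hc, ho, rfl⟩

/-- A compact open subgroup `U` is minimizing for `g` if it attains the minimum defining the scale
of `g`, that is, `[U : U ∩ g⁻¹Ug] = s(g)`. -/
structure IsMinimizing (g : G) (U : Subgroup G) : Prop where
  isCompact : IsCompact (U : Set G)
  isOpen : IsOpen (U : Set G)
  relIndex_eq : (conjSubgroup g U).relIndex U = scaleOf G g

theorem exists_isMinimizing (g : G) {W : Subgroup G} (hc : IsCompact (W : Set G))
    (ho : IsOpen (W : Set G)) : ∃ U, IsMinimizing g U := by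
  obtain ⟨U, hUc, hUo, hU⟩ := Nat.sInf_mem (s := {n : ℕ | ∃ U : Subgroup G,
    IsCompact (U : Set G) ∧ IsOpen (U : Set G) ∧ n = (conjSubgroup g U).relIndex U})
    ⟨_, W, hc, ho, rfl⟩
  exact ⟨U, hUc, hUo, hU.symm⟩

namespace IsMinimizing

variable [IsTopologicalGroup G] {g : G} {U : Subgroup G}

theorem scaleOf_ne_zero (hU : IsMinimizing g U) : scaleOf G g ≠ 0 :=
  hU.relIndex_eq ▸
    relIndex_ne_zero_of_isOpen_of_isCompact (isOpen_conjSubgroup g hU.isOpen) hU.isCompact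

theorem sup_normal (hU : IsMinimizing g U) (K : Subgroup G) [K.Normal]
    (hK : IsCompact (K : Set G)) : IsMinimizing g (U ⊔ K) := by
  have hc : IsCompact ((U ⊔ K : Subgroup G) : Set G) := by
    rw [Subgroup.mul_normal]
    exact hU.isCompact.mul hK
  have ho : IsOpen ((U ⊔ K : Subgroup G) : Set G) := Subgroup.isOpen_mono le_sup_left hU.isOpen
  refine ⟨hc, ho, le_antisymm (Nat.le_of_dvd hU.scaleOf_ne_zero.bot_lt ?_)
    (scaleOf_le_relIndex g hc ho)⟩
  rw [conjSubgroup_sup, conjSubgroup_of_normal g K, ← hU.relIndex_eq]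
  exact sup_relIndex_sup_dvd _ _ K

theorem inf_conjSubgroup (hU : IsMinimizing g U) : IsMinimizing g (U ⊓ conjSubgroup g U) := by
  have ho : IsOpen ((U ⊓ conjSubgroup g U : Subgroup G) : Set G) :=
    hU.isOpen.inter (isOpen_conjSubgroup g hU.isOpen)
  have hc := isCompact_of_isOpen_of_le ho hU.isCompact inf_le_left
  have hindex : (conjSubgroup g (conjSubgroup g U)).relIndex (conjSubgroup g U) = scaleOf G g := by
    rw [relIndex_conjSubgroup_conjSubgroup, hU.relIndex_eq]
  refine ⟨hc, ho, le_antisymm ?_ (scaleOf_le_relIndex g hc ho)⟩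
  calc (conjSubgroup g (U ⊓ conjSubgroup g U)).relIndex (U ⊓ conjSubgroup g U)
      = (conjSubgroup g (conjSubgroup g U)).relIndex (U ⊓ conjSubgroup g U) := by
        rw [conjSubgroup_inf, inf_comm (conjSubgroup g U) (conjSubgroup g (conjSubgroup g U)),
          ← Subgroup.relIndex_inf_mul_relIndex, inf_eq_right.mpr inf_le_right,
          Subgroup.relIndex_eq_one.mpr inf_le_right, mul_one]
    _ ≤ (conjSubgroup g (conjSubgroup g U)).relIndex (conjSubgroup g U) :=
        Subgroup.relIndex_le_of_le_right inf_le_right (hindex ▸ hU.scaleOf_ne_zero)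
    _ = scaleOf G g := hindex

theorem exists_relIndex_eq_scaleOf_pow (hU : IsMinimizing g U) {K : Subgroup G} [K.Normal]
    (hKU : K ≤ U) (n : ℕ) :
    ∃ V, IsMinimizing g V ∧ K ≤ V ∧ V ≤ U ∧ V.relIndex U = scaleOf G g ^ n := by
  induction n with
  | zero => exact ⟨U, hU, hKU, le_rfl, by simp⟩
  | succ n ih =>
    obtain ⟨V, hV, hKV, hVU, hindex⟩ := ih
    have hK : K ≤ conjSubgroup g V := conjSubgroup_of_normal g K ▸ conjSubgroup_mono g hKV
    refine ⟨V ⊓ conjSubgroup g V, hV.inf_conjSubgroup, le_inf hKV hK, inf_le_left.trans hVU, ?_⟩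
    rw [← Subgroup.relIndex_mul_relIndex _ V U inf_le_left hVU, Subgroup.inf_relIndex_left,
      hV.relIndex_eq, hindex, pow_succ']

end IsMinimizing

theorem exists_isOpen_dvd_relIndex_of_dvd_scaleOf [IsTopologicalGroup G] {g : G} {p : ℕ}
    (hp : p.Prime) (hdvd : p ∣ scaleOf G g) (K : Subgroup G) [K.Normal]
    (hK : IsCompact (K : Set G)) {W : Subgroup G} (hWc : IsCompact (W : Set G))
    (hWo : IsOpen (W : Set G)) :
    ∃ V : Subgroup G, IsOpen (V : Set G) ∧ K ≤ V ∧ p ∣ V.relIndex W := by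
  obtain ⟨U₀, hU₀⟩ := exists_isMinimizing g hWc hWo
  obtain ⟨U, hU, hKU⟩ : ∃ U, IsMinimizing g U ∧ K ≤ U :=
    ⟨U₀ ⊔ K, hU₀.sup_normal K hK, le_sup_right⟩
  obtain ⟨V, hV, hKV, hVU, hindex⟩ := hU.exists_relIndex_eq_scaleOf_pow hKU (W.relIndex U)
  refine ⟨V, hV.isOpen, hKV, ?_⟩
  by_contra hVW
  have hcoprime : ¬ p ∣ V.relIndex (W ⊓ U) := fun h ↦
    hVW (h.trans (inf_comm W U ▸ relIndex_inf_dvd_relIndex_of_le hVU W))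
  have hpow : p ^ W.relIndex U ∣ V.relIndex (W ⊓ U) * W.relIndex U :=
    (hindex ▸ pow_dvd_pow_of_dvd hdvd _).trans (relIndex_dvd_relIndex_inf_mul_relIndex V W U)
  have hpow' : p ^ W.relIndex U ∣ W.relIndex U :=
    ((hp.coprime_iff_not_dvd.mpr hcoprime).pow_left _).dvd_of_dvd_mul_left hpow
  have hWU := relIndex_ne_zero_of_isOpen_of_isCompact hWo hU.isCompact
  exact (Nat.lt_pow_self hp.one_lt).not_ge (Nat.le_of_dvd hWU.bot_lt hpow')

end Scale

section Stabilizers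

variable {G V : Type*} [Group G] [MulAction G V]

theorem relIndex_stabilizer (H : Subgroup G) (v : V) :
    (stabilizer G v).relIndex H = (orbit H v).ncard :=
  index_stabilizer H v

theorem fixingSubgroup_insert (v : V) (s : Set V) :
    fixingSubgroup G (insert v s) = stabilizer G v ⊓ fixingSubgroup G s := by
  ext g
  simp [mem_fixingSubgroup_iff]

theorem coe_ker_toPermHom :
    ((toPermHom G V).ker : Set G) = ⋂ v : V, (stabilizer G v : Set G) := by
  ext g
  simp [Equiv.ext_iff]

variable [TopologicalSpace G]

theorem isOpen_fixingSubgroup (hopen : ∀ v : V, IsOpen (stabilizer G v : Set G)) {s : Set V}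
    (hs : s.Finite) : IsOpen (fixingSubgroup G s : Set G) := by
  have hinter : (fixingSubgroup G s : Set G) = ⋂ v ∈ s, (stabilizer G v : Set G) := by
    ext g
    simp [mem_fixingSubgroup_iff]
  rw [hinter]
  exact hs.isOpen_biInter fun v _ ↦ hopen v

theorem isCompact_ker_toPermHom (hclosed : ∀ v : V, IsClosed (stabilizer G v : Set G)) {v : V}
    (hv : IsCompact (stabilizer G v : Set G)) : IsCompact ((toPermHom G V).ker : Set G) := by
  rw [coe_ker_toPermHom]
  exact hv.of_isClosed_subset (isClosed_iInter hclosed) (Set.iInter_subset _ v)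

theorem exists_finset_fixingSubgroup_inf_le
    (hclosed : ∀ v : V, IsClosed (stabilizer G v : Set G)) {W O : Subgroup G}
    (hW : IsCompact (W : Set G)) (hO : IsOpen (O : Set G)) (hker : (toPermHom G V).ker ≤ O) :
    ∃ F : Finset V, fixingSubgroup G (F : Set V) ⊓ W ≤ O := by
  have hempty : (W \ O : Set G) ∩ ⋂ v : V, (stabilizer G v : Set G) = ∅ := by
    rw [← coe_ker_toPermHom, ← Set.disjoint_iff_inter_eq_empty]
    exact Set.disjoint_sdiff_left.mono_right hker
  obtain ⟨F, hF⟩ := (hW.diff hO).elim_finite_subfamily_closed _ hclosed hempty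
  refine ⟨F, fun g hg ↦ ?_⟩
  by_contra hgO
  exact hF.subset ⟨⟨hg.2, hgO⟩, Set.mem_iInter₂.mpr fun v hv ↦
    (mem_fixingSubgroup_iff G).mp hg.1 v hv⟩

end Stabilizers

section GraphAction

variable {G V : Type*} [Group G] [MulAction G V] {Γ : SimpleGraph V}

variable (G Γ) in
/-- The action of `G` on the vertices is by automorphisms of `Γ`. Only one implication is recorded;
the converse is the same statement for the inverse group element. -/
def PreservesAdj : Prop :=
  ∀ (g : G) (u v : V), Γ.Adj u v → Γ.Adj (g • u) (g • v)

theorem encard_neighborSet_le_smul (hadj : PreservesAdj G Γ) (g : G) (v : V) :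
    (Γ.neighborSet v).encard ≤ (Γ.neighborSet (g • v)).encard :=
  Set.encard_le_encard_of_injOn (fun u hu ↦ hadj g v u hu) (MulAction.injective g).injOn

variable {p : ℕ} {H : Subgroup G}

theorem orbit_subset_neighborSet (hadj : PreservesAdj G Γ) {a c : V} (hac : Γ.Adj a c)
    (ha : H ≤ stabilizer G a) : orbit H c ⊆ Γ.neighborSet a := by
  rintro _ ⟨h, rfl⟩
  have hadj' := hadj h a c hac
  rwa [ha h.2] at hadj'

theorem encard_orbit_lt_of_adj (hadj : PreservesAdj G Γ) (hp : 1 < p) {a b c : V}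
    (hdeg : (Γ.neighborSet a).encard ≤ p) (hab : Γ.Adj a b) (hac : Γ.Adj a c)
    (ha : H ≤ stabilizer G a) (hb : H ≤ stabilizer G b) : (orbit H c).encard < p := by
  have hfixed : b ∈ fixedPoints H V := fun h ↦ hb h.2
  have horbit := orbit_subset_neighborSet hadj hac ha
  rcases eq_or_ne c b with rfl | hcb
  · exact (Set.encard_le_one_iff_subsingleton.mpr
      (subsingleton_orbit_iff_mem_fixedPoints.mpr hfixed)).trans_lt (by exact_mod_cast hp)
  · have hb_notMem : b ∉ orbit H c := fun h ↦
      hcb (mem_fixedPoints'.mp hfixed c (orbit_eq_iff.mpr h ▸ mem_orbit_self c))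
    have hfinite := Set.finite_of_encard_le_coe hdeg
    exact (hfinite.subset horbit).encard_lt_encard
      (Set.ssubset_iff_of_subset horbit |>.mpr ⟨b, hab, hb_notMem⟩) |>.trans_le hdeg

theorem not_dvd_relIndex_stabilizer_of_adj (hadj : PreservesAdj G Γ) (hp : 1 < p)
    {a b c : V} (hdeg : (Γ.neighborSet a).encard ≤ p) (hab : Γ.Adj a b) (hac : Γ.Adj a c)
    (ha : H ≤ stabilizer G a) (hb : H ≤ stabilizer G b) :
    ¬ p ∣ (stabilizer G c).relIndex H := by
  have hlt := encard_orbit_lt_of_adj hadj hp hdeg hab hac ha hb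
  have hfinite : (orbit H c).Finite := Set.finite_of_encard_le_coe hlt.le
  rw [relIndex_stabilizer]
  refine Nat.not_dvd_of_pos_of_lt ((Set.ncard_pos hfinite).mpr (nonempty_orbit c)) ?_
  rwa [← hfinite.cast_ncard_eq, Nat.cast_lt] at hlt

theorem not_dvd_relIndex_stabilizer_of_walk (hadj : PreservesAdj G Γ) (hp : p.Prime)
    (hdeg : ∀ v, (Γ.neighborSet v).encard ≤ p) {a b x : V} (w : Γ.Walk a x) (hab : Γ.Adj a b)
    (ha : H ≤ stabilizer G a) (hb : H ≤ stabilizer G b) :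
    ¬ p ∣ (stabilizer G x).relIndex H := by
  induction w generalizing b H with
  | nil => simpa [Subgroup.relIndex_eq_one.mpr ha] using hp.ne_one
  | @cons a c x hac _ ih =>
    have hc : ¬ p ∣ (stabilizer G c).relIndex H :=
      not_dvd_relIndex_stabilizer_of_adj hadj hp.one_lt (hdeg a) hab hac ha hb
    have hx : ¬ p ∣ (stabilizer G x).relIndex (stabilizer G c ⊓ H) :=
      ih hac.symm inf_le_left (inf_le_right.trans ha)
    exact fun h ↦ hp.not_dvd_mul hx hc (h.trans (relIndex_dvd_relIndex_inf_mul_relIndex _ _ H))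

theorem not_dvd_relIndex_stabilizer (hadj : PreservesAdj G Γ) (hp : p.Prime)
    (hdeg : ∀ v, (Γ.neighborSet v).encard ≤ p) (hconn : Γ.Preconnected) {v : V}
    (hH : H ≤ fixingSubgroup G (insert v (Γ.neighborSet v))) (x : V) :
    ¬ p ∣ (stabilizer G x).relIndex H := by
  have hfix : ∀ u ∈ insert v (Γ.neighborSet v), H ≤ stabilizer G u := fun u hu h hh ↦
    (mem_fixingSubgroup_iff G).mp (hH hh) u hu
  have hv := hfix v (Set.mem_insert v _)
  obtain ⟨w⟩ := hconn v x
  cases w with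
  | nil => simpa [Subgroup.relIndex_eq_one.mpr hv] using hp.ne_one
  | cons hvc w =>
    exact not_dvd_relIndex_stabilizer_of_walk hadj hp hdeg w hvc.symm
      (hfix _ (Set.mem_insert_of_mem v hvc)) hv

theorem not_dvd_relIndex_fixingSubgroup (hadj : PreservesAdj G Γ) (hp : p.Prime)
    (hdeg : ∀ v, (Γ.neighborSet v).encard ≤ p) (hconn : Γ.Preconnected) {v : V}
    (hH : H ≤ fixingSubgroup G (insert v (Γ.neighborSet v))) (F : Finset V) :
    ¬ p ∣ (fixingSubgroup G (F : Set V)).relIndex H := by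
  classical
  induction F using Finset.induction_on with
  | empty => simpa using hp.ne_one
  | insert x F _ ih =>
    rw [Finset.coe_insert, fixingSubgroup_insert, ← Subgroup.relIndex_inf_mul_relIndex]
    exact hp.not_dvd_mul
      (not_dvd_relIndex_stabilizer hadj hp hdeg hconn (inf_le_right.trans hH) x) ih

theorem not_dvd_scaleOf_of_encard_neighborSet_le [TopologicalSpace G] [IsTopologicalGroup G]
    (hadj : PreservesAdj G Γ) (hp : p.Prime) (hdeg : ∀ v, (Γ.neighborSet v).encard ≤ p)
    (hconn : Γ.Preconnected) (hopen : ∀ v : V, IsOpen (stabilizer G v : Set G)) {v : V}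
    (hcompact : IsCompact (stabilizer G v : Set G)) (g : G) : ¬ p ∣ scaleOf G g := by
  intro hdvd
  have hclosed (u : V) : IsClosed (stabilizer G u : Set G) :=
    Subgroup.isClosed_of_isOpen _ (hopen u)
  let W := fixingSubgroup G (insert v (Γ.neighborSet v))
  have hWo : IsOpen (W : Set G) :=
    isOpen_fixingSubgroup hopen ((Set.finite_of_encard_le_coe (hdeg v)).insert v)
  have hWv : W ≤ stabilizer G v := (fixingSubgroup_insert v _).trans_le inf_le_left
  have hWc : IsCompact (W : Set G) := isCompact_of_isOpen_of_le hWo hcompact hWv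
  obtain ⟨O, hO, hker, hOW⟩ := exists_isOpen_dvd_relIndex_of_dvd_scaleOf hp hdvd
    (toPermHom G V).ker (isCompact_ker_toPermHom hclosed hcompact) hWc hWo
  obtain ⟨F, hF⟩ := exists_finset_fixingSubgroup_inf_le hclosed hWc hO hker
  apply not_dvd_relIndex_fixingSubgroup hadj hp hdeg hconn (le_refl W) F
  rw [← Subgroup.inf_relIndex_right]
  exact hOW.trans (Subgroup.relIndex_dvd_of_le_left W hF)

end GraphAction

theorem prime_factor_of_scale_degree_bound_general {G V : Type*} [Group G] [TopologicalSpace G]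
    [IsTopologicalGroup G] (g : G) (p : ℕ) (hp : p.Prime) (hdvd : p ∣ scaleOf G g)
    (Γ : SimpleGraph V) (ρ : G →* Equiv.Perm V) (hCA : IsCayleyAbels Γ ρ) :
    ∀ v : V, p + 1 ≤ (Γ.neighborSet v).ncard := by
  obtain ⟨hconn, hfin, hadj, htrans, hstab⟩ := hCA
  let _ : MulAction G V := MulAction.compHom V ρ
  intro v
  by_contra! hlt
  have hdeg (u : V) : (Γ.neighborSet u).encard ≤ p := by
    obtain ⟨h, rfl⟩ := htrans u v
    exact (encard_neighborSet_le_smul hadj h u).trans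
      (Set.encard_le_coe_iff_finite_ncard_le.mpr ⟨hfin _, Nat.lt_succ_iff.mp hlt⟩)
  exact not_dvd_scaleOf_of_encard_neighborSet_le hadj hp hdeg hconn.preconnected
    (fun u ↦ (hstab u).2) (hstab v).1 g hdvd

/-- Let `G` be a compactly generated t.d.l.c. group, `g ∈ G` and `p` a prime dividing the
scale `s(g)`.  Then every Cayley–Abels graph for `G` has degree at least `p + 1`.
In particular, if `p` is the largest prime occurring as a factor of a value of the scale
function then `md(G) ≥ p + 1`. -/
theorem prime_factor_of_scale_degree_bound {G V : Type*} [Group G] [TopologicalSpace G]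
    [IsTopologicalGroup G] [T2Space G] [TotallyDisconnectedSpace G] [LocallyCompactSpace G]
    (hcg : ∃ S : Set G, IsCompact S ∧ Subgroup.closure S = ⊤)
    (g : G) (p : ℕ) (hp : p.Prime) (hdvd : p ∣ scaleOf G g)
    (Γ : SimpleGraph V) (ρ : G →* Equiv.Perm V) (hCA : IsCayleyAbels Γ ρ) :
    ∀ v : V, p + 1 ≤ (Γ.neighborSet v).ncard :=
  prime_factor_of_scale_degree_bound_general g p hp hdvd Γ ρ hCA
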